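/- Let 1 < p < ∞ and 0 < s < 1. For −1/(p−1) < β < sp/(p−1) define λ(β,s,p) = 2∫₀¹ J_p(1−τ^β)(1 − τ^{sp−1−β(p−1)})/(1−τ)^{1+sp} dτ + 2/(sp). Then the function β ↦ λ(β,s,p) attains its maximum at β = (sp−1)/p; that is, for every β with −1/(p−1) < β < sp/(p−1), λ(β,s,p) ≤ λ((sp−1)/p, s, p) = 2∫₀¹ |1−τ^{(sp−1)/p}|^p/(1−τ)^{1+sp} dτ + 2/(sp). -/

import Mathlib

/-!
Put `x = τ^β`, `z = τ^{(sp-1)/p}` and `y = τ^{sp-1-β(p-1)}`. The exponents are such that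
`y = z^p / x^{p-1}`, so the maximality in `β` holds already pointwise in `τ`: it is the discrete
Picone inequality `J_p(1 - x) (1 - z^p / x^{p-1}) ≤ |1 - z|^p` (`Jp_mul_le`), a consequence of the
joint convexity of `(a, t) ↦ a^p / t^{p-1}` (`add_rpow_le_perspective`). Equality holds for
`x = z`, i.e. for `β = (sp-1)/p`.

The pointwise bound passes to the integrals because the maximal integrand is integrable
(`integrableOn_max`): as `|(sp-1)/p| < 1`, it is dominated by the Beta density
`τ^{min(sp-1, 0)} (1 - τ)^{p-1-sp}`, both of whose exponents exceed `-1`. Integrability for the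
other values of `β` is not needed: a non-integrable integrand has integral `0` by convention, and
the maximal integrand is nonnegative.
-/

open MeasureTheory Real Filter Topology ENNReal

noncomputable section

/-- The Heisenberg group `ℍⁿ` as `ℝⁿ × ℝⁿ × ℝ`. -/
abbrev Heis (n : ℕ) : Type := (Fin n → ℝ) × (Fin n → ℝ) × ℝ

/-- Group law `ξ ∘ ξ' = (x+x', y+y', t+t'+2⟨y,x'⟩−2⟨x,y'⟩)`. -/
def Hmul {n : ℕ} (a b : Heis n) : Heis n :=
  (a.1 + b.1, a.2.1 + b.2.1,
    a.2.2 + b.2.2 + 2 * (∑ i, a.2.1 i * b.1 i) - 2 * (∑ i, a.1 i * b.2.1 i))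

/-- Group inverse `ξ⁻¹ = −ξ`. -/
def Hinv {n : ℕ} (a : Heis n) : Heis n := (-a.1, -a.2.1, -a.2.2)

/-- Squared Euclidean norm of the horizontal part `z = (x,y) ∈ ℝ^{2n}`. -/
def zsq {n : ℕ} (a : Heis n) : ℝ := (∑ i, (a.1 i) ^ 2) + (∑ i, (a.2.1 i) ^ 2)

/-- Euclidean norm `|z|` of the horizontal part. -/
def znorm {n : ℕ} (a : Heis n) : ℝ := Real.sqrt (zsq a)

/-- The Koranyi–Folland gauge `d(ξ) = (|z|⁴ + t²)^{1/4}`. -/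
def hd {n : ℕ} (a : Heis n) : ℝ := ((zsq a) ^ 2 + (a.2.2) ^ 2) ^ ((1 : ℝ) / 4)

/-- Homogeneous dimension `Q = 2n + 2` (as a real number). -/
def hQ (n : ℕ) : ℝ := 2 * n + 2

/-- First coordinate `x₁` of a point of `ℍⁿ`. -/
def x1 {n : ℕ} (a : Heis n) : ℝ := if h : 0 < n then a.1 ⟨0, h⟩ else 0

/-- The half-space `ℍⁿ₊ = {ξ : x₁ > 0}`. -/
def halfSpace (n : ℕ) : Set (Heis n) := {a | 0 < x1 a}

/-- Euclidean distance `|z - z'|` of the horizontal parts. -/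
def zdist {n : ℕ} (a b : Heis n) : ℝ := znorm (Hmul (Hinv a) b)

/-- `J_p(t) = |t|^{p-2} t`. -/
def Jp (p t : ℝ) : ℝ := |t| ^ (p - 2) * t

/-- The Gagliardo-type seminorm (to the `p`-th power)
`[f]_{s,p,α,Ω}^p = ∫_Ω ∫_Ω |f(ξ)-f(ξ')|^p / (d(ξ⁻¹∘ξ')^{Q+sp} |z-z'|^α)`. -/
def gagSem {n : ℕ} (p s α : ℝ) (Ω : Set (Heis n)) (f : Heis n → ℝ) : ℝ≥0∞ :=
  ∫⁻ ξ in Ω, ∫⁻ ξ' in Ω, ENNReal.ofReal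
    (|f ξ - f ξ'| ^ p / (hd (Hmul (Hinv ξ) ξ') ^ (hQ n + s * p) * zdist ξ ξ' ^ α))

/-- The seminorm for `α = 0` (no horizontal weight). -/
def gagSem0 {n : ℕ} (p s : ℝ) (Ω : Set (Heis n)) (f : Heis n → ℝ) : ℝ≥0∞ :=
  ∫⁻ ξ in Ω, ∫⁻ ξ' in Ω, ENNReal.ofReal
    (|f ξ - f ξ'| ^ p / hd (Hmul (Hinv ξ) ξ') ^ (hQ n + s * p))

/-- The strip `𝒟_{r,R} = {ξ : r < x₁ < R}`. -/
def strip (n : ℕ) (r R : ℝ) : Set (Heis n) := {ξ | r < x1 ξ ∧ x1 ξ < R}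

/-- `f ∈ W^{s,p,α}_{loc(x₁)}(ℍⁿ₊)`. -/
def MemWlocx1 (n : ℕ) (p s α : ℝ) (f : Heis n → ℝ) : Prop :=
  Measurable f ∧ ∀ r R : ℝ, 0 < r → r < R →
    (∫⁻ ξ in strip n r R, ENNReal.ofReal (|f ξ| ^ p)) < ⊤ ∧
    gagSem p s α (strip n r R) f < ⊤

/-- `f ∈ L^{p-1}_{sp,α}(ℍⁿ)`. -/
def MemLsp (n : ℕ) (p s α : ℝ) (f : Heis n → ℝ) : Prop :=
  Measurable f ∧
  (∀ K : Set (Heis n), IsCompact K →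
    (∫⁻ ξ in K, ENNReal.ofReal (|f ξ| ^ (p - 1))) < ⊤) ∧
  (∫⁻ ξ, ENNReal.ofReal (|f ξ| ^ (p - 1) /
      ((1 + hd ξ) ^ (hQ n + s * p) * (1 + znorm ξ) ^ α))) < ⊤

/-- `φ ∈ W^{s,p,α}(Ω)`. -/
def MemW (n : ℕ) (p s α : ℝ) (Ω : Set (Heis n)) (φ : Heis n → ℝ) : Prop :=
  Measurable φ ∧ (∫⁻ ξ in Ω, ENNReal.ofReal (|φ ξ| ^ p)) < ⊤ ∧ gagSem p s α Ω φ < ⊤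

/-- `φ ∈ W^{s,p}(Ω)` (the case `α = 0`). -/
def MemW0 (n : ℕ) (p s : ℝ) (Ω : Set (Heis n)) (φ : Heis n → ℝ) : Prop :=
  Measurable φ ∧ (∫⁻ ξ in Ω, ENNReal.ofReal (|φ ξ| ^ p)) < ⊤ ∧ gagSem0 p s Ω φ < ⊤

/-- `f ∈ W^{s,p}_{loc}(ℍⁿ₊)`. -/
def MemWloc0 (n : ℕ) (p s : ℝ) (f : Heis n → ℝ) : Prop :=
  Measurable f ∧ ∀ K : Set (Heis n), IsCompact K → K ⊆ halfSpace n →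
    (∫⁻ ξ in K, ENNReal.ofReal (|f ξ| ^ p)) < ⊤ ∧ gagSem0 p s K f < ⊤

/-- `f ∈ L^{p-1}_{sp}(ℍⁿ)`. -/
def MemLsp0 (n : ℕ) (p s : ℝ) (f : Heis n → ℝ) : Prop :=
  Measurable f ∧
  (∀ K : Set (Heis n), IsCompact K →
    (∫⁻ ξ in K, ENNReal.ofReal (|f ξ| ^ (p - 1))) < ⊤) ∧
  (∫⁻ ξ, ENNReal.ofReal (|f ξ| ^ (p - 1) / (1 + hd ξ) ^ (hQ n + s * p))) < ⊤

/-- Surface measure of the unit sphere `S^{m-1} ⊂ ℝ^m`: `|S^{m-1}| = 2π^{m/2}/Γ(m/2)`. -/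
def sphereArea (m : ℕ) : ℝ := 2 * Real.pi ^ ((m : ℝ) / 2) / Real.Gamma ((m : ℝ) / 2)

/-- `ℐ(k,θ,α) = (∫₀^∞ (1+t²)^{-(k+2+θ)/4} dt) (∫₀^∞ r^{k-2}(1+r²)^{-(k+θ+α)/2} dr)`. -/
def calI (k : ℕ) (θ α : ℝ) : ℝ :=
  (∫ t in Set.Ioi (0 : ℝ), (1 + t ^ 2) ^ (-(((k : ℝ) + 2 + θ) / 4))) *
  (∫ r in Set.Ioi (0 : ℝ), r ^ ((k : ℝ) - 2) * (1 + r ^ 2) ^ (-(((k : ℝ) + θ + α) / 2)))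

/-- `Λ_{s,p,α} = 2∫₀¹ |1-τ^{(sp+α-1)/p}|^p/(1-τ)^{1+sp+α} dτ + 2/(sp+α)`. -/
def LamC (s p α : ℝ) : ℝ :=
  2 * (∫ τ in Set.Ioo (0 : ℝ) 1,
      |1 - τ ^ ((s * p + α - 1) / p)| ^ p / (1 - τ) ^ (1 + s * p + α)) + 2 / (s * p + α)

/-- `u_β(τ) = τ^β` for `τ > 0`, extended by `0`. -/
def ubeta (β τ : ℝ) : ℝ := if 0 < τ then τ ^ β else 0

/-- `λ(β,s,p)`. -/
def lam (p s β : ℝ) : ℝ :=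
  2 * (∫ τ in Set.Ioo (0 : ℝ) 1,
      Jp p (1 - τ ^ β) * (1 - τ ^ (s * p - 1 - β * (p - 1))) / (1 - τ) ^ (1 + s * p)) +
  2 / (s * p)

/-- `λ_ε(β,s,p)`. -/
def lamEps (p s β ε : ℝ) : ℝ :=
  2 * (∫ τ in Set.Ioo (0 : ℝ) (1 / (1 + ε)), Jp p (1 - τ ^ β) / |1 - τ| ^ (1 + s * p)) +
  2 * (∫ τ in Set.Ioi (1 + ε), Jp p (1 - τ ^ β) / |1 - τ| ^ (1 + s * p)) +
  2 / (s * p)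

/-- The box `D_{R₀}`. -/
def boxD (n : ℕ) (R₀ : ℝ) : Set (Heis n) :=
  {ξ | (∀ i, |ξ.1 i| ≤ R₀) ∧ (∀ i, |ξ.2.1 i| ≤ R₀) ∧ |ξ.2.2| ≤ R₀ ^ 2}

/-- The box `D_{R₀,t}`. -/
def boxDt (n : ℕ) (R₀ : ℝ) : Set (Heis n) :=
  {ξ | (∀ i, |ξ.1 i| ≤ R₀) ∧ (∀ i, |ξ.2.1 i| ≤ R₀) ∧ |ξ.2.2| ≤ R₀ ^ 2 + R₀}

/-- Jensen's inequality for `x ↦ x ^ p`, in the form of joint convexity of its perspective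
function `(a, t) ↦ a ^ p / t ^ (p - 1)`. -/
lemma add_rpow_le_perspective {p a b t : ℝ} (hp : 1 < p) (ha : 0 ≤ a) (hb : 0 ≤ b)
    (ht0 : 0 < t) (ht1 : t < 1) :
    (a + b) ^ p ≤ a ^ p / t ^ (p - 1) + b ^ p / (1 - t) ^ (p - 1) := by
  have ht2 : 0 < 1 - t := by linarith
  have h := (convexOn_rpow hp.le).2 (x := a / t) (y := b / (1 - t))
    (Set.mem_Ici.2 (by positivity)) (Set.mem_Ici.2 (by positivity)) ht0.le ht2.le (by ring)
  have key : ∀ {c r : ℝ}, 0 ≤ c → 0 < r → r * (c / r) ^ p = c ^ p / r ^ (p - 1) := by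
    intro c r hc hr
    rw [Real.div_rpow hc hr.le, Real.rpow_sub_one hr.ne']
    field_simp
  simp only [smul_eq_mul] at h
  rwa [key ha ht0, key hb ht2, mul_div_cancel₀ _ ht0.ne', mul_div_cancel₀ _ ht2.ne'] at h

lemma Jp_of_pos {p t : ℝ} (ht : 0 < t) : Jp p t = t ^ (p - 1) := by
  rw [Jp, abs_of_pos ht, ← Real.rpow_add_one ht.ne']
  ring_nf

lemma Jp_neg (p t : ℝ) : Jp p (-t) = -Jp p t := by
  simp [Jp]

lemma Jp_mul_self {p : ℝ} (hp : 1 < p) (t : ℝ) : Jp p t * t = |t| ^ p := by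
  rcases eq_or_ne t 0 with rfl | ht
  · simp [Real.zero_rpow (by linarith : p ≠ 0)]
  · have h : 0 < |t| := abs_pos.2 ht
    rw [Jp, mul_assoc, ← abs_mul_abs_self t, ← mul_assoc, ← Real.rpow_add_one h.ne',
      ← Real.rpow_add_one h.ne']
    ring_nf

/-- The discrete Picone inequality
`J_p(c - d) (a^p / c^{p-1} - b^p / d^{p-1}) ≤ |a - b|^p` with `a = c = 1`, `b = z`, `d = x`. -/
lemma Jp_mul_le {p x z : ℝ} (hp : 1 < p) (hx : 0 < x) (hz : 0 < z) :
    Jp p (1 - x) * (1 - z ^ p / x ^ (p - 1)) ≤ |1 - z| ^ p := by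
  have hxp : 0 < x ^ (p - 1) := Real.rpow_pos_of_pos hx _
  rcases lt_trichotomy x 1 with h | rfl | h
  · have h1 : 0 < 1 - x := by linarith
    have h1p : 0 < (1 - x) ^ (p - 1) := Real.rpow_pos_of_pos h1 _
    have hJ := add_rpow_le_perspective hp (abs_nonneg (1 - z)) hz.le h1 (by linarith)
    have h2 : (1 : ℝ) ≤ (|1 - z| + z) ^ p :=
      Real.one_le_rpow (by linarith [le_abs_self (1 - z)]) (by linarith)
    rw [_root_.sub_sub_cancel] at hJ
    rw [Jp_of_pos h1, mul_comm, ← le_div_iff₀ h1p]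
    linarith
  · simpa [Jp] using Real.rpow_nonneg (abs_nonneg (1 - z)) p
  · have h1 : 0 < x - 1 := by linarith
    have h1p : 0 < (x - 1) ^ (p - 1) := Real.rpow_pos_of_pos h1 _
    -- Jensen applied to `z ≤ |1 - z| + 1`, with weights `(x - 1) / x` and `1 / x`.
    have hJ := add_rpow_le_perspective (t := (x - 1) / x) hp (abs_nonneg (1 - z)) zero_le_one
      (by positivity) (by rw [div_lt_one hx]; linarith)
    have h2 : z ^ p ≤ (|1 - z| + 1) ^ p :=
      Real.rpow_le_rpow hz.le (by linarith [neg_abs_le (1 - z)]) (by linarith)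
    have h3 : 1 - (x - 1) / x = x⁻¹ := by field_simp; ring
    rw [h3, Real.div_rpow h1.le hx.le, Real.inv_rpow hx.le, Real.one_rpow] at hJ
    have h4 : z ^ p / x ^ (p - 1) ≤ |1 - z| ^ p / (x - 1) ^ (p - 1) + 1 := by
      rw [div_le_iff₀ hxp]
      refine (h2.trans hJ).trans (le_of_eq ?_)
      field_simp
    rw [← neg_sub x 1, Jp_neg, Jp_of_pos h1, neg_mul_comm, mul_comm, ← le_div_iff₀ h1p]
    linarith

lemma integrableOn_beta {a b : ℝ} (ha : -1 < a) (hb : -1 < b) :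
    IntegrableOn (fun τ : ℝ => τ ^ a * (1 - τ) ^ b) (Set.Ioo 0 1) := by
  have h := Complex.betaIntegral_convergent (u := ((a + 1 : ℝ) : ℂ)) (v := ((b + 1 : ℝ) : ℂ))
    (by rw [Complex.ofReal_re]; linarith) (by rw [Complex.ofReal_re]; linarith)
  rw [intervalIntegrable_iff_integrableOn_Ioo_of_le zero_le_one] at h
  refine IntegrableOn.congr_fun (Integrable.norm h) (fun τ hτ => ?_) measurableSet_Ioo
  have h1 : 0 < 1 - τ := by linarith [hτ.2]
  have e : ((1 : ℂ) - (τ : ℂ)) = ((1 - τ : ℝ) : ℂ) := by push_cast; rfl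
  simp only [norm_mul]
  rw [e, Complex.norm_cpow_eq_rpow_re_of_pos hτ.1, Complex.norm_cpow_eq_rpow_re_of_pos h1]
  simp

lemma abs_one_sub_rpow_le {a τ : ℝ} (ha0 : -1 ≤ a) (ha1 : a ≤ 1) (h0 : 0 < τ) (h1 : τ < 1) :
    |1 - τ ^ a| ≤ τ ^ (min a 0) * (1 - τ) := by
  rcases le_total 0 a with h | h
  · have e1 : τ ^ a ≤ 1 := Real.rpow_le_one h0.le h1.le h
    have e2 : τ ≤ τ ^ a := by
      simpa using Real.rpow_le_rpow_of_exponent_ge h0 h1.le ha1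
    rw [min_eq_right h, Real.rpow_zero, abs_of_nonneg (by linarith)]
    linarith
  · have e1 : 1 ≤ τ ^ a := Real.one_le_rpow_of_pos_of_le_one_of_nonpos h0 h1.le h
    -- `τ ^ (a + 1) ≤ 1` as `a ≥ -1`.
    have e2 : τ ^ a * τ ≤ 1 := by
      rw [← Real.rpow_add_one h0.ne']
      exact Real.rpow_le_one h0.le h1.le (by linarith)
    rw [min_eq_left h, abs_of_nonpos (by linarith)]
    linarith

lemma integrableOn_max {p s : ℝ} (hp1 : 1 < p) (hs0 : 0 < s) (hs1 : s < 1) :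
    IntegrableOn (fun τ : ℝ => |1 - τ ^ ((s * p - 1) / p)| ^ p / (1 - τ) ^ (1 + s * p))
      (Set.Ioo 0 1) := by
  have hp0 : 0 < p := by linarith
  set a := (s * p - 1) / p with ha
  have hap : a * p = s * p - 1 := by rw [ha]; field_simp
  have hsp : 0 < s * p := by positivity
  have hsp1 : s * p < p := by nlinarith
  have ha0 : -1 ≤ a := by rw [ha, le_div_iff₀ hp0]; linarith
  have ha1 : a ≤ 1 := by rw [ha, div_le_iff₀ hp0]; linarith
  have hm : -1 < min a 0 * p := by
    rcases le_total a 0 with h | h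
    · rw [min_eq_left h]; linarith
    · rw [min_eq_right h]; linarith
  have hb : -1 < p - (1 + s * p) := by linarith
  refine Integrable.mono' (integrableOn_beta hm hb) (Measurable.aestronglyMeasurable (by fun_prop))
    ((ae_restrict_iff' measurableSet_Ioo).2 (ae_of_all _ fun τ hτ => ?_))
  have h1 : 0 < 1 - τ := by linarith [hτ.2]
  have h1p : 0 < (1 - τ) ^ (1 + s * p) := Real.rpow_pos_of_pos h1 _
  have h0 : 0 < τ := hτ.1
  rw [Real.norm_of_nonneg (by positivity), Real.rpow_sub h1, Real.rpow_mul h0.le, ← mul_div_assoc,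
    ← Real.mul_rpow (by positivity) h1.le]
  gcongr
  exact abs_one_sub_rpow_le ha0 ha1 h0 hτ.2

/-- Proposition 5.1(ii): `β ↦ λ(β,s,p)` is maximal at
`β = (sp−1)/p`. -/
theorem lam_maximal (p s : ℝ) (hp1 : 1 < p) (hs0 : 0 < s) (hs1 : s < 1) :
    (∀ β : ℝ, -(1 / (p - 1)) < β → β < s * p / (p - 1) →
      lam p s β ≤ lam p s ((s * p - 1) / p)) ∧
    lam p s ((s * p - 1) / p) =
      2 * (∫ τ in Set.Ioo (0 : ℝ) 1,
          |1 - τ ^ ((s * p - 1) / p)| ^ p / (1 - τ) ^ (1 + s * p)) + 2 / (s * p) := by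
  have hp0 : 0 < p := by linarith
  -- At `β = (sp-1)/p` both exponents agree and the integrand becomes `J_p(t) t = |t|^p`.
  have hmax : lam p s ((s * p - 1) / p) =
      2 * (∫ τ in Set.Ioo (0 : ℝ) 1,
          |1 - τ ^ ((s * p - 1) / p)| ^ p / (1 - τ) ^ (1 + s * p)) + 2 / (s * p) := by
    have he : s * p - 1 - (s * p - 1) / p * (p - 1) = (s * p - 1) / p := by field_simp; ring
    simp only [lam, he, Jp_mul_self hp1]
  refine ⟨fun β _ _ => ?_, hmax⟩
  rw [hmax, lam]
  gcongr 2 * ?_ + _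
  by_cases hint : IntegrableOn (fun τ : ℝ => Jp p (1 - τ ^ β) *
      (1 - τ ^ (s * p - 1 - β * (p - 1))) / (1 - τ) ^ (1 + s * p)) (Set.Ioo 0 1)
  · refine setIntegral_mono_on hint (integrableOn_max hp1 hs0 hs1) measurableSet_Ioo
      fun τ hτ => ?_
    have h0 : 0 < τ := hτ.1
    have h1 : 0 < 1 - τ := by linarith [hτ.2]
    have e : τ ^ (s * p - 1 - β * (p - 1)) =
        (τ ^ ((s * p - 1) / p)) ^ p / (τ ^ β) ^ (p - 1) := by
      rw [← Real.rpow_mul h0.le, ← Real.rpow_mul h0.le, ← Real.rpow_sub h0,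
        div_mul_cancel₀ _ hp0.ne']
    rw [e]
    gcongr
    exact Jp_mul_le hp1 (Real.rpow_pos_of_pos h0 _) (Real.rpow_pos_of_pos h0 _)
  · -- The Bochner integral of a non-integrable function is `0`, and the right side is nonnegative.
    rw [integral_undef hint]
    refine setIntegral_nonneg measurableSet_Ioo fun τ hτ => ?_
    have h1 : 0 < 1 - τ := by linarith [hτ.2]
    positivity
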